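/- arXiv:2602.23311 — 2 statements merged into one kernel-verified Lean document; each statement's English description precedes it below -/
import Mathlib

section
/- For every unconstrained coefficient vector β ∈ ℝ^D, the transformation H is twice continuously differentiable on all of ℝ; in particular, the transition from the spline segment on [k_1, k_m] to the identity function outside [k_1, k_m] is continuous and C². -/
open MeasureTheory Finset

noncomputable section

/-- The cardinal cubic B-spline. -/
def cubicN (t : ℝ) : ℝ :=
  if 0 ≤ t ∧ t < 1 then t ^ 3 / 6
  else if 1 ≤ t ∧ t < 2 then (-3 * t ^ 3 + 12 * t ^ 2 - 12 * t + 4) / 6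
  else if 2 ≤ t ∧ t < 3 then (3 * t ^ 3 - 24 * t ^ 2 + 60 * t - 44) / 6
  else if 3 ≤ t ∧ t ≤ 4 then (4 - t) ^ 3 / 6
  else 0

/-- Equidistant knots `k_j = k0 + j·k`. -/
def knot (k0 k : ℝ) (j : ℤ) : ℝ := k0 + (j : ℝ) * k

/-- Cubic B-spline basis functions `B_j(x) = N((x − k_{j−3})/k)` for `j = 1, …, J`. -/
def Bspl (k0 k : ℝ) (j : ℕ) (x : ℝ) : ℝ := cubicN ((x - knot k0 k ((j : ℤ) - 3)) / k)

/-- The coefficients `γ_1, …, γ_J` (with `J = D + 7`, `m = D + 5`), defined from the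
unconstrained vector `β ∈ ℝ^D`. -/
def gam (D : ℕ) (k0 k : ℝ) (β : Fin D → ℝ) (j : ℕ) : ℝ :=
  if j = 1 then k0
  else if j = 2 ∨ j = 3 ∨ j = 4 ∨ j = D + 5 ∨ j = D + 6 ∨ j = D + 7 then Real.log k
  else if h : 5 ≤ j ∧ j ≤ D + 4 then
    β ⟨j - 5, by omega⟩ - Real.log ((∑ d, Real.exp (β d)) / ((D : ℝ) * k))
  else 0

/-- The transformation `H`: a cubic B-spline with coefficients
`γ_1 + ∑_{ℓ=2}^j exp(γ_ℓ)` on `[k_1, k_m]` (with `m = D + 5`), and the identity outside. -/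
def Hfun (D : ℕ) (k0 k : ℝ) (β : Fin D → ℝ) (x : ℝ) : ℝ :=
  if knot k0 k 1 ≤ x ∧ x ≤ knot k0 k ((D : ℤ) + 5) then
    ∑ j ∈ Finset.Icc 1 (D + 7),
      Bspl k0 k j x * (gam D k0 k β 1 + ∑ l ∈ Finset.Icc 2 j, Real.exp (gam D k0 k β l))
  else x


theorem posPow_hasDerivAt (n : ℕ) (t : ℝ) :
    HasDerivAt (fun t : ℝ => (max t 0) ^ (n + 2)) ((n + 2 : ℝ) * (max t 0) ^ (n + 1)) t := by
  rcases lt_trichotomy t 0 with h | h | h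
  · have h1 : HasDerivAt (fun _ : ℝ => (0 : ℝ)) 0 t := hasDerivAt_const t 0
    rw [max_eq_right h.le]
    simp only [ne_eq, Nat.add_eq_zero_iff, one_ne_zero, and_false, not_false_eq_true, zero_pow,
      mul_zero]
    refine h1.congr_of_eventuallyEq ?_
    filter_upwards [Iio_mem_nhds h] with x hx
    rw [max_eq_right (le_of_lt hx)]
    simp
  · subst h
    rw [hasDerivAt_iff_isLittleO]
    simp only [max_self, sub_zero, ne_eq, Nat.add_eq_zero_iff, one_ne_zero, and_false,
      not_false_eq_true, zero_pow, mul_zero, smul_eq_mul, OfNat.ofNat_ne_zero]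
    have hb : (fun x : ℝ => (max x 0) ^ (n + 2)) =O[nhds 0] (fun x : ℝ => x ^ (n + 2)) := by
      refine Asymptotics.IsBigO.of_bound 1 (Filter.Eventually.of_forall fun x => ?_)
      rw [one_mul, norm_pow, norm_pow]
      refine pow_le_pow_left₀ (norm_nonneg _) ?_ _
      rw [Real.norm_eq_abs, Real.norm_eq_abs, abs_of_nonneg (le_max_right _ _)]
      exact max_le (le_abs_self x) (abs_nonneg x)
    have hl : (fun x : ℝ => x ^ (n + 2)) =o[nhds 0] (fun x : ℝ => x) :=
      Asymptotics.isLittleO_pow_id (by omega)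
    simpa using hb.trans_isLittleO hl
  · have h1 : HasDerivAt (fun x : ℝ => x ^ (n + 2)) ((n + 2 : ℝ) * t ^ (n + 1)) t := by
      have := hasDerivAt_pow (n + 2) t
      push_cast at this
      exact this
    rw [max_eq_left h.le]
    refine h1.congr_of_eventuallyEq ?_
    filter_upwards [Ioi_mem_nhds h] with x hx
    rw [max_eq_left (le_of_lt hx)]

theorem posCube_contDiff : ContDiff ℝ 2 (fun t : ℝ => (max t 0) ^ 3) := by
  have d1 : deriv (fun t : ℝ => (max t 0) ^ 3) = fun t => 3 * (max t 0) ^ 2 := by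
    funext t
    have := (posPow_hasDerivAt 1 t).deriv
    norm_num at this ⊢
    exact this
  have d0 : deriv (fun t : ℝ => (max t 0) ^ 2) = fun t => 2 * (max t 0) := by
    funext t
    have := (posPow_hasDerivAt 0 t).deriv
    norm_num at this ⊢
    exact this
  have c1 : ContDiff ℝ 1 (fun t : ℝ => (max t 0) ^ 2) := by
    rw [contDiff_one_iff_deriv]
    refine ⟨fun t => (posPow_hasDerivAt 0 t).differentiableAt, ?_⟩
    rw [d0]
    fun_prop
  rw [show (2 : WithTop ℕ∞) = 1 + 1 by norm_num, contDiff_succ_iff_deriv]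
  refine ⟨fun t => (posPow_hasDerivAt 1 t).differentiableAt, by simp, ?_⟩
  rw [d1]
  exact contDiff_const.mul c1

theorem cubicN_eq (t : ℝ) : cubicN t = ((max t 0) ^ 3 - 4 * (max (t - 1) 0) ^ 3
    + 6 * (max (t - 2) 0) ^ 3 - 4 * (max (t - 3) 0) ^ 3 + (max (t - 4) 0) ^ 3) / 6 := by
  unfold cubicN
  rcases lt_or_ge t 0 with h0 | h0
  · rw [max_eq_right (by linarith), max_eq_right (by linarith), max_eq_right (by linarith),
      max_eq_right (by linarith), max_eq_right (by linarith)]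
    rw [if_neg (by rintro ⟨a, b⟩; linarith), if_neg (by rintro ⟨a, b⟩; linarith),
      if_neg (by rintro ⟨a, b⟩; linarith), if_neg (by rintro ⟨a, b⟩; linarith)]
    norm_num
  rw [max_eq_left h0]
  rcases lt_or_ge t 1 with h1 | h1
  · rw [max_eq_right (by linarith), max_eq_right (by linarith), 
      max_eq_right (by linarith), max_eq_right (by linarith), if_pos ⟨h0, h1⟩]
    ring
  rw [max_eq_left (by linarith : (0 : ℝ) ≤ t - 1), if_neg (by rintro ⟨a, b⟩; linarith)]
  rcases lt_or_ge t 2 with h2 | h2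
  · rw [max_eq_right (by linarith),
      max_eq_right (by linarith), max_eq_right (by linarith), if_pos ⟨h1, h2⟩]
    ring
  rw [max_eq_left (by linarith : (0 : ℝ) ≤ t - 2), if_neg (by rintro ⟨a, b⟩; linarith)]
  rcases lt_or_ge t 3 with h3 | h3
  · rw [max_eq_right (by linarith), max_eq_right (by linarith), if_pos ⟨h2, h3⟩]
    ring
  rw [max_eq_left (by linarith : (0 : ℝ) ≤ t - 3), if_neg (by rintro ⟨a, b⟩; linarith)]
  rcases le_or_gt t 4 with h4 | h4
  · rw [max_eq_right (by linarith), if_pos ⟨h3, h4⟩]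
    ring
  rw [max_eq_left (by linarith : (0 : ℝ) ≤ t - 4), if_neg (by rintro ⟨a, b⟩; linarith)]
  ring

theorem cubicN_contDiff : ContDiff ℝ 2 cubicN := by
  have h : ∀ c : ℝ, ContDiff ℝ 2 (fun t : ℝ => (max (t - c) 0) ^ 3) := fun c =>
    posCube_contDiff.comp (contDiff_id.sub contDiff_const)
  rw [show cubicN = _ from funext cubicN_eq]
  exact (((((posCube_contDiff.sub (contDiff_const.mul (h 1))).add
    (contDiff_const.mul (h 2))).sub (contDiff_const.mul (h 3))).add (h 4))).div_const 6

theorem cubicN_zero_left (t : ℝ) (h : t ≤ 0) : cubicN t = 0 := by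
  rw [cubicN_eq, max_eq_right (by linarith), max_eq_right (by linarith),
    max_eq_right (by linarith), max_eq_right (by linarith), max_eq_right (by linarith)]
  norm_num

theorem cubicN_zero_right (t : ℝ) (h : 4 ≤ t) : cubicN t = 0 := by
  rw [cubicN_eq, max_eq_left (by linarith), max_eq_left (by linarith),
    max_eq_left (by linarith), max_eq_left (by linarith), max_eq_left (by linarith)]
  ring

theorem cubicN_repro (u A k : ℝ) (h0 : 0 ≤ u) (h1 : u ≤ 1) :
    cubicN (u + 3) * A + cubicN (u + 2) * (A + k) + cubicN (u + 1) * (A + 2 * k)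
      + cubicN u * (A + 3 * k) = A + k + u * k := by
  have e0 : cubicN u = u ^ 3 / 6 := by
    rw [cubicN_eq, max_eq_left (by linarith), max_eq_right (by linarith),
      max_eq_right (by linarith), max_eq_right (by linarith), max_eq_right (by linarith)]
    ring
  have e1 : cubicN (u + 1) = ((u + 1) ^ 3 - 4 * u ^ 3) / 6 := by
    rw [cubicN_eq, max_eq_left (by linarith), max_eq_left (by linarith),
      max_eq_right (by linarith), max_eq_right (by linarith), max_eq_right (by linarith)]
    ring
  have e2 : cubicN (u + 2) = ((u + 2) ^ 3 - 4 * (u + 1) ^ 3 + 6 * u ^ 3) / 6 := by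
    rw [cubicN_eq, max_eq_left (by linarith), max_eq_left (by linarith),
      max_eq_left (by linarith), max_eq_right (by linarith), max_eq_right (by linarith)]
    ring
  have e3 : cubicN (u + 3) = (1 - u) ^ 3 / 6 := by
    rw [cubicN_eq, max_eq_left (by linarith), max_eq_left (by linarith),
      max_eq_left (by linarith), max_eq_left (by linarith), max_eq_right (by linarith)]
    ring
  rw [e0, e1, e2, e3]
  ring

/-- A spline whose four active coefficients are linear reproduces the identity. -/
theorem spline_local (D : ℕ) (k0 k : ℝ) (hk : 0 < k) (c : ℕ → ℝ) (n : ℕ) (hn : n + 4 ≤ D + 7)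
    (h1 : c (n + 1) = k0 + n * k) (h2 : c (n + 2) = k0 + n * k + k)
    (h3 : c (n + 3) = k0 + n * k + 2 * k) (h4 : c (n + 4) = k0 + n * k + 3 * k)
    (x : ℝ) (hx0 : k0 + (n + 1) * k ≤ x) (hx1 : x ≤ k0 + (n + 2) * k) :
    ∑ j ∈ Finset.Icc 1 (D + 7), Bspl k0 k j x * c j = x := by
  obtain ⟨u, hu⟩ : ∃ u : ℝ, u = (x - (k0 + (n + 1) * k)) / k := ⟨_, rfl⟩
  have hxu : x = k0 + (n + 1) * k + u * k := by
    rw [hu]; field_simp; ring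
  have u0 : 0 ≤ u := by rw [hu]; exact div_nonneg (by linarith) hk.le
  have u1 : u ≤ 1 := by rw [hu, div_le_one hk]; linarith
  have hB : ∀ j : ℕ, Bspl k0 k j x = cubicN (u + n + 4 - j) := by
    intro j
    unfold Bspl knot
    congr 1
    rw [hxu]
    push_cast
    field_simp
    ring
  have hs : ({n + 1, n + 2, n + 3, n + 4} : Finset ℕ) ⊆ Finset.Icc 1 (D + 7) := by
    intro j hj
    simp only [Finset.mem_insert, Finset.mem_singleton] at hj
    rw [Finset.mem_Icc]
    omega
  rw [← Finset.sum_subset hs]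
  · rw [Finset.sum_insert (by simp), Finset.sum_insert (by simp), Finset.sum_insert (by simp),
      Finset.sum_singleton, hB, hB, hB, hB, h1, h2, h3, h4]
    have := cubicN_repro u (k0 + n * k) k u0 u1
    push_cast
    rw [show u + n + 4 - ((n : ℝ) + 1) = u + 3 by ring,
      show u + n + 4 - ((n : ℝ) + 2) = u + 2 by ring,
      show u + n + 4 - ((n : ℝ) + 3) = u + 1 by ring,
      show u + n + 4 - ((n : ℝ) + 4) = u by ring]
    linarith
  · intro j _ hj
    simp only [Finset.mem_insert, Finset.mem_singleton] at hj
    rw [hB]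
    rcases (by omega : j ≤ n ∨ n + 5 ≤ j) with h | h
    · have : (j : ℝ) ≤ n := by exact_mod_cast h
      rw [cubicN_zero_right _ (by linarith), zero_mul]
    · have : (n : ℝ) + 5 ≤ j := by exact_mod_cast h
      rw [cubicN_zero_left _ (by linarith), zero_mul]

theorem exp_gam_log (D : ℕ) (k0 k : ℝ) (hk : 0 < k) (β : Fin D → ℝ) (j : ℕ) 
    (h : j = 2 ∨ j = 3 ∨ j = 4 ∨ j = D + 5 ∨ j = D + 6 ∨ j = D + 7) :
    Real.exp (gam D k0 k β j) = k := by
  unfold gam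
  rw [if_neg (by omega), if_pos h, Real.exp_log hk]

theorem sum_mid (D : ℕ) (hD : 1 ≤ D) (k0 k : ℝ) (hk : 0 < k) (β : Fin D → ℝ) :
    ∑ i ∈ Finset.range D, Real.exp (gam D k0 k β (i + 5)) = D * k := by
  rw [Finset.sum_range]
  have hDp : (0 : ℝ) < D := by exact_mod_cast hD
  have hS : 0 < ∑ d, Real.exp (β d) := 
    Finset.sum_pos (fun d _ => Real.exp_pos _) ⟨⟨0, hD⟩, Finset.mem_univ _⟩
  have : ∀ i : Fin D, Real.exp (gam D k0 k β (i + 5)) =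
      Real.exp (β i) / ((∑ d, Real.exp (β d)) / ((D : ℝ) * k)) := by
    intro i
    have := i.2
    unfold gam
    rw [if_neg (by omega), if_neg (by omega), dif_pos (by omega), Real.exp_sub,
      Real.exp_log (by positivity)]
    simp
  rw [Finset.sum_congr rfl (fun i _ => this i), ← Finset.sum_div]
  field_simp

/-- For every `β ∈ ℝ^D`, the transformation `H` is twice continuously
differentiable on all of `ℝ`; in particular the transition from the spline segment on
`[k_1, k_m]` to the identity outside is continuous and `C²`. -/
theorem H_contDiff_two (D : ℕ) (hD : 1 ≤ D) (k0 k : ℝ) (hk : 0 < k)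
    (β : Fin D → ℝ) :
    ContDiff ℝ 2 (Hfun D k0 k β) := by
  obtain ⟨c, hc⟩ : ∃ c : ℕ → ℝ, c = fun j =>
    (gam D k0 k β 1 + ∑ l ∈ Finset.Icc 2 j, Real.exp (gam D k0 k β l)) := ⟨_, rfl⟩
  obtain ⟨S, hS⟩ : ∃ S : ℝ → ℝ, S = fun x => ∑ j ∈ Finset.Icc 1 (D + 7), Bspl k0 k j x * c j :=
    ⟨_, rfl⟩
  have hDr : (1 : ℝ) ≤ D := by exact_mod_cast hD
  have hH : ∀ x, Hfun D k0 k β x =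
      if k0 + k ≤ x ∧ x ≤ k0 + (D + 5) * k then S x else x := by
    intro x
    unfold Hfun knot
    rw [hS, hc]
    push_cast
    rw [one_mul]
  have hSc : ContDiff ℝ 2 S := by
    rw [hS]
    refine ContDiff.sum fun j _ => ContDiff.mul ?_ contDiff_const
    exact cubicN_contDiff.comp ((contDiff_id.sub contDiff_const).div_const k)
  have c1 : c 1 = k0 := by simp [hc, gam]
  have cs : ∀ j, 1 ≤ j → c (j + 1) = c j + Real.exp (gam D k0 k β (j + 1)) := by
    intro j hj
    simp only [hc]
    rw [Finset.sum_Icc_succ_top (by omega)]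
    ring
  have c2 : c 2 = k0 + k := by
    rw [cs 1 le_rfl, c1, exp_gam_log D k0 k hk β _ (by omega)]
  have c3 : c 3 = k0 + 2 * k := by
    rw [cs 2 (by omega), c2, exp_gam_log D k0 k hk β _ (by omega)]; ring
  have c4 : c 4 = k0 + 3 * k := by
    rw [cs 3 (by omega), c3, exp_gam_log D k0 k hk β _ (by omega)]; ring
  have cm : ∀ n : ℕ, c (n + 4) =
      k0 + 3 * k + ∑ i ∈ Finset.range n, Real.exp (gam D k0 k β (i + 5)) := by
    intro n
    induction n with
    | zero => simp [c4]
    | succ n ih =>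
      rw [show n + 1 + 4 = (n + 4) + 1 by ring, cs _ (by omega), ih, Finset.sum_range_succ]
      ring
  have d4 : c (D + 4) = k0 + 3 * k + D * k := by rw [cm, sum_mid D hD k0 k hk β]
  have d5 : c (D + 5) = k0 + 4 * k + D * k := by
    rw [cs (D + 4) (by omega), d4, exp_gam_log D k0 k hk β _ (by omega)]; ring
  have d6 : c (D + 6) = k0 + 5 * k + D * k := by
    rw [cs (D + 5) (by omega), d5, exp_gam_log D k0 k hk β _ (by omega)]; ring
  have d7 : c (D + 7) = k0 + 6 * k + D * k := by
    rw [cs (D + 6) (by omega), d6, exp_gam_log D k0 k hk β _ (by omega)]; ring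
  have hlo : ∀ x, k0 + k ≤ x → x ≤ k0 + 2 * k → S x = x := by
    intro x h1 h2
    rw [hS]
    refine spline_local D k0 k hk c 0 (by omega) ?_ ?_ ?_ ?_ x ?_ ?_
    · simp [c1]
    · simp [c2]
    · simp [c3]
    · simp [c4]
    · push_cast; linarith
    · push_cast; linarith
  have hhi : ∀ x, k0 + (D + 4) * k ≤ x → x ≤ k0 + (D + 5) * k → S x = x := by
    intro x h1 h2
    rw [hS]
    refine spline_local D k0 k hk c (D + 3) (by omega) ?_ ?_ ?_ ?_ x ?_ ?_
    · rw [d4]; push_cast; ring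
    · rw [d5]; push_cast; ring
    · rw [d6]; push_cast; ring
    · rw [d7]; push_cast; ring
    · push_cast; linarith
    · push_cast; linarith
  have hDk : k ≤ D * k := by nlinarith
  rw [contDiff_iff_contDiffAt]
  intro x
  rcases lt_or_ge x (k0 + 2 * k) with hx | hx
  · refine (contDiff_id (𝕜 := ℝ) (E := ℝ)).contDiffAt.congr_of_eventuallyEq ?_
    filter_upwards [Iio_mem_nhds hx] with y hy
    rw [hH, id]
    split_ifs with h
    · exact hlo y h.1 (le_of_lt hy)
    · rfl
  rcases lt_or_ge (k0 + (D + 4) * k) x with hx' | hx'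
  · refine (contDiff_id (𝕜 := ℝ) (E := ℝ)).contDiffAt.congr_of_eventuallyEq ?_
    filter_upwards [Ioi_mem_nhds hx'] with y hy
    rw [hH, id]
    split_ifs with h
    · exact hhi y (le_of_lt hy) h.2
    · rfl
  · refine hSc.contDiffAt.congr_of_eventuallyEq ?_
    have ha : k0 + k < x := by linarith
    have hb : x < k0 + (D + 5) * k := by nlinarith
    filter_upwards [Ioi_mem_nhds ha, Iio_mem_nhds hb] with y hy hy'
    rw [hH, if_pos ⟨le_of_lt hy, le_of_lt hy'⟩]


end
end

section
/- If all entries of β are equal, i.e. β = β₀·(1, …, 1) for some β₀ ∈ ℝ, then γ_j = log k for every j = 2, …, J, and consequently H is the identity function: H(x) = x for all x ∈ ℝ. -/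
open MeasureTheory Finset

noncomputable section

theorem cubicN_p0 (u : ℝ) (h0 : 0 ≤ u) (h1 : u ≤ 1) : cubicN u = u ^ 3 / 6 := by
  rcases h1.lt_or_eq with h | rfl
  · unfold cubicN; rw [if_pos ⟨h0, h⟩]
  · norm_num [cubicN]

theorem cubicN_p1 (u : ℝ) (h0 : 0 ≤ u) (h1 : u ≤ 1) :
    cubicN (u + 1) = (-3 * (u+1) ^ 3 + 12 * (u+1) ^ 2 - 12 * (u+1) + 4) / 6 := by
  rcases h1.lt_or_eq with h | rfl
  · unfold cubicN
    rw [if_neg (by intro h; linarith [h.2]), if_pos ⟨by linarith, by linarith⟩]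
  · norm_num [cubicN]

theorem cubicN_p2 (u : ℝ) (h0 : 0 ≤ u) (h1 : u ≤ 1) :
    cubicN (u + 2) = (3 * (u+2) ^ 3 - 24 * (u+2) ^ 2 + 60 * (u+2) - 44) / 6 := by
  rcases h1.lt_or_eq with h | rfl
  · unfold cubicN
    rw [if_neg (by intro h; linarith [h.2]), if_neg (by intro h; linarith [h.2]),
      if_pos ⟨by linarith, by linarith⟩]
  · norm_num [cubicN]

theorem cubicN_p3 (u : ℝ) (h0 : 0 ≤ u) (h1 : u ≤ 1) :
    cubicN (u + 3) = (1 - u) ^ 3 / 6 := by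
  unfold cubicN
  rw [if_neg (by intro h; linarith [h.2]), if_neg (by intro h; linarith [h.2]),
      if_neg (by intro h; linarith [h.2]), if_pos ⟨by linarith, by linarith⟩]
  ring

theorem gam_const (D : ℕ) (hD : 1 ≤ D) (k0 k : ℝ) (hk : 0 < k) (β0 : ℝ) (j : ℕ)
    (h2 : 2 ≤ j) (hj : j ≤ D + 7) : gam D k0 k (fun _ => β0) j = Real.log k := by
  unfold gam
  rw [if_neg (by omega)]
  split_ifs with h1 h3
  · rfl
  · have hD' : (D : ℝ) ≠ 0 := by positivity
    have : (∑ _d : Fin D, Real.exp β0) / ((D : ℝ) * k) = Real.exp β0 / k := by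
      simp only [Finset.sum_const, Finset.card_univ, Fintype.card_fin, nsmul_eq_mul]
      field_simp
    rw [this, Real.log_div (Real.exp_ne_zero _) hk.ne', Real.log_exp]
    ring
  · omega

theorem exists_cell (M : ℕ) (t : ℝ) (h1 : 1 ≤ t) (h2 : t ≤ (M : ℝ) + 2) :
    ∃ n : ℕ, 1 ≤ n ∧ n ≤ M + 1 ∧ (n : ℝ) ≤ t ∧ t ≤ (n : ℝ) + 1 := by
  rcases h2.lt_or_eq with h | h
  · refine ⟨⌊t⌋₊, Nat.le_floor (by simpa using h1), ?_, Nat.floor_le (by linarith),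
      (Nat.lt_floor_add_one t).le⟩
    have : ⌊t⌋₊ < M + 2 := (Nat.floor_lt (by linarith)).2 (by push_cast; exact h)
    omega
  · exact ⟨M + 1, by omega, le_rfl, by push_cast; linarith, by push_cast; linarith⟩

/-- If all entries of `β` are equal, i.e. `β = β₀·(1, …, 1)`, then
`γ_j = log k` for every `j = 2, …, J` (with `J = D + 7`), and consequently `H` is the
identity function. -/
theorem H_collapse_to_identity (D : ℕ) (hD : 1 ≤ D) (k0 k : ℝ) (hk : 0 < k)
    (β0 : ℝ) :
    (∀ j : ℕ, 2 ≤ j → j ≤ D + 7 → gam D k0 k (fun _ => β0) j = Real.log k) ∧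
    (∀ x : ℝ, Hfun D k0 k (fun _ => β0) x = x) := by
  refine ⟨gam_const D hD k0 k hk β0, fun x => ?_⟩
  unfold Hfun
  split_ifs with hx
  swap
  · rfl
  obtain ⟨hx1, hx2⟩ := hx
  unfold knot at hx1 hx2
  push_cast at hx1 hx2
  obtain ⟨t, rfl⟩ : ∃ t, x = k0 + t * k := ⟨(x - k0) / k, by field_simp; ring⟩
  have ht1 : 1 ≤ t := le_of_mul_le_mul_right (by linarith) hk
  have ht2 : t ≤ (D : ℝ) + 5 := le_of_mul_le_mul_right (by linarith) hk
  obtain ⟨n, hn1, hn2, hnt, htn⟩ := exists_cell (D + 3) t ht1 (by push_cast; linarith)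
  have hterm : ∀ j ∈ Finset.Icc 1 (D + 7),
      Bspl k0 k j (k0 + t * k) * (gam D k0 k (fun _ => β0) 1 +
        ∑ l ∈ Finset.Icc 2 j, Real.exp (gam D k0 k (fun _ => β0) l))
      = cubicN (t - j + 3) * (k0 + ((j : ℝ) - 1) * k) := by
    intro j hj
    rw [Finset.mem_Icc] at hj
    have e1 : Bspl k0 k j (k0 + t * k) = cubicN (t - j + 3) := by
      unfold Bspl knot
      congr 1
      push_cast
      field_simp
      ring
    have e2 : ∑ l ∈ Finset.Icc 2 j, Real.exp (gam D k0 k (fun _ => β0) l)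
        = ((j : ℝ) - 1) * k := by
      rw [Finset.sum_congr rfl (g := fun _ => k)]
      · rw [Finset.sum_const, Nat.card_Icc, nsmul_eq_mul]
        rw [show j + 1 - 2 = j - 1 by omega, Nat.cast_sub hj.1]
        simp
      · intro l hl
        rw [Finset.mem_Icc] at hl
        rw [gam_const D hD k0 k hk β0 l hl.1 (by omega), Real.exp_log hk]
    have e3 : gam D k0 k (fun _ => β0) 1 = k0 := by simp [gam]
    rw [e1, e2, e3]
  rw [Finset.sum_congr rfl hterm]
  have hsub : Finset.Icc n (n + 3) ⊆ Finset.Icc 1 (D + 7) :=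
    Finset.Icc_subset_Icc hn1 (by omega)
  rw [← Finset.sum_subset hsub]
  · obtain ⟨u, rfl⟩ : ∃ u, t = n + u := ⟨t - n, by ring⟩
    have hu0 : 0 ≤ u := by linarith
    have hu1 : u ≤ 1 := by linarith
    rw [Finset.sum_Icc_succ_top (by omega), Finset.sum_Icc_succ_top (by omega),
      Finset.sum_Icc_succ_top (by omega), Finset.Icc_self, Finset.sum_singleton]
    push_cast
    rw [show (n : ℝ) + u - n + 3 = u + 3 by ring,
      show (n : ℝ) + u - (n + 1) + 3 = u + 2 by ring,
      show (n : ℝ) + u - (n + 1 + 1) + 3 = u + 1 by ring,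
      show (n : ℝ) + u - (n + 2 + 1) + 3 = u by ring,
      cubicN_p0 u hu0 hu1, cubicN_p1 u hu0 hu1, cubicN_p2 u hu0 hu1, cubicN_p3 u hu0 hu1]
    ring
  · intro j _ hj
    rw [Finset.mem_Icc, not_and_or, not_le, not_le] at hj
    rcases hj with hj | hj
    · have : (j : ℝ) + 1 ≤ n := by exact_mod_cast hj
      rw [cubicN_zero_right _ (by linarith), zero_mul]
    · have : (n : ℝ) + 3 + 1 ≤ j := by exact_mod_cast hj
      rw [cubicN_zero_left _ (by linarith), zero_mul]

end
end
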